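/- Let H be a subgroup of G that is not normal in G, with |H| = 2. Then the set of numbers of common neighbours over all pairs of distinct non-adjacent vertices of Γ_H(G) equals {2, 4, 6, |G| - |H|}. -/

import Mathlib

/-!
Translating by a vertex reduces the count to `N(c) = #{x ∈ S : c x ∈ S}` with `c = v u⁻¹ ∉ S ∪ {1}`.
The set `S` is a union of three lines `(g,1)`, `(1,g)`, `(g,g)` with `g ∉ H`. Write `H = {1, h}`.

* If `c` is one of `(h,1)`, `(1,h)`, `(h,h)`, then `c` preserves the corresponding line and sends no
  point of the other two lines into `S`, so `N(c) = |G| - |H|` (`ncard_T_fst`, `ncard_T_snd`,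
  `ncard_T_diag`).
* Otherwise `c = (a,b)` with `a ≠ 1`, `b ≠ 1`, `a ≠ b`, and for each ordered pair of distinct lines
  at most one point of the first is sent into the second (`mem_T_iff`). Counting these six candidates
  gives `2` if `a` or `b` lies in `H`, and otherwise `2`, plus `2` if `a⁻¹b ∉ H`, plus `2` if
  `ab⁻¹ ∉ H` (`ncard_T_generic`).

As `H` is not normal, some `a` does not commute with `h`. The value `2` is attained at `(h, a)`, the
value `4` at `(a, ah)`, and the value `6` at `(a, b)` for any `b ∉ {1, h, a, ah, ha}`, which exists
because `|G|` is even and at least `5`.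
-/

open Pointwise

variable {G : Type*}

/-- The connection set `S = {(g,e),(e,g),(g,g) : g ∈ G \ H}` (as a predicate). -/
def inS [Group G] (H : Subgroup G) (p : G × G) : Prop :=
  (p.1 ∉ H ∧ p.2 = 1) ∨ (p.1 = 1 ∧ p.2 ∉ H) ∨ (p.1 = p.2 ∧ p.1 ∉ H)

/-- Adjacency in the Cayley graph `Γ_H(G)` on `G × G`: distinct vertices
`(g₁,g₂)`, `(g₃,g₄)` are adjacent iff `(g₁g₃⁻¹, g₂g₄⁻¹) ∈ S`. -/
def gAdj [Group G] (H : Subgroup G) (u v : G × G) : Prop :=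
  u ≠ v ∧ inS H (u.1 * v.1⁻¹, u.2 * v.2⁻¹)

/-- The set of common neighbours of `u` and `v` in `Γ_H(G)`. -/
def commonNbrs [Group G] (H : Subgroup G) (u v : G × G) : Set (G × G) :=
  {w | gAdj H u w ∧ gAdj H v w}

/-- The `c`-set of `Γ_H(G)`: the set of all numbers of common neighbours of
pairs of distinct non-adjacent vertices. -/
def cSet [Group G] (H : Subgroup G) : Set ℕ :=
  {n | ∃ u v : G × G, u ≠ v ∧ ¬ gAdj H u v ∧ n = (commonNbrs H u v).ncard}

/-- The elements `x` of the connection set such that `c * x` is in the connection set as well. -/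
def T [Group G] (H : Subgroup G) (c : G × G) : Set (G × G) :=
  {x | inS H x ∧ inS H (c * x)}

lemma not_inS_one [Group G] (H : Subgroup G) : ¬ inS H (1 : G × G) := by
  simp [inS, H.one_mem]

lemma inS_inv [Group G] (H : Subgroup G) (p : G × G) : inS H p⁻¹ ↔ inS H p := by
  simp [inS]

lemma gAdj_iff [Group G] (H : Subgroup G) (u v : G × G) : gAdj H u v ↔ inS H (u * v⁻¹) := by
  refine ⟨fun h => h.2, fun h => ⟨?_, h⟩⟩
  rintro rfl
  rw [mul_inv_cancel] at h
  exact not_inS_one H h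

lemma ncard_commonNbrs [Group G] (H : Subgroup G) (u v : G × G) :
    (commonNbrs H u v).ncard = (T H (v * u⁻¹)).ncard := by
  refine Set.ncard_congr (fun w _ => u * w⁻¹) ?_ ?_ ?_
  · rintro w ⟨h1, h2⟩
    rw [gAdj_iff] at h1 h2
    refine ⟨h1, ?_⟩
    simpa [mul_assoc] using h2
  · intro x y _ _ h
    simpa using h
  · rintro x ⟨h1, h2⟩
    refine ⟨x⁻¹ * u, ⟨?_, ?_⟩, ?_⟩
    · rw [gAdj_iff]; simpa using h1
    · rw [gAdj_iff]; simpa [mul_assoc] using h2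
    · simp

lemma cSet_eq [Group G] (H : Subgroup G) :
    cSet H = {n | ∃ c : G × G, c ≠ 1 ∧ ¬ inS H c ∧ n = (T H c).ncard} := by
  ext n
  constructor
  · rintro ⟨u, v, huv, hn, rfl⟩
    refine ⟨v * u⁻¹, ?_, ?_, ncard_commonNbrs H u v⟩
    · intro h
      exact huv (mul_inv_eq_one.mp h).symm
    · rw [gAdj_iff] at hn
      rw [← inS_inv]
      simpa using hn
  · rintro ⟨c, hc, hn, rfl⟩
    refine ⟨1, c, hc.symm, ?_, ?_⟩
    · rw [gAdj_iff, one_mul, inS_inv]; exact hn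
    · rw [ncard_commonNbrs]; simp

lemma ncard_compl_subgroup [Group G] [Fintype G] (H : Subgroup G) :
    {g : G | g ∉ H}.ncard = Nat.card G - Nat.card H := by
  have := Set.ncard_compl (H : Set G)
  rw [← Nat.card_coe_set_eq (H : Set G)] at this
  exact this

lemma ncard_T_fst [Group G] [Fintype G] (H : Subgroup G) {h : G} (hH : h ∈ H) (h1 : h ≠ 1) :
    (T H (h, 1)).ncard = Nat.card G - Nat.card H := by
  have e : T H (h, 1) = (fun g : G => ((g, 1) : G × G)) '' {g | g ∉ H} := by
    ext ⟨x, y⟩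
    simp only [T, inS, Set.mem_ofPred_eq, Set.mem_image, Prod.mk_mul_mk, one_mul, Prod.mk.injEq,
      H.mul_mem_cancel_left hH]
    have := H.one_mem
    have hmem : ∀ z, h * z = 1 → z ∈ H := fun z e => by
      rw [← H.mul_mem_cancel_left hH, e]; exact H.one_mem
    grind [mul_eq_right]
  rw [e, Set.ncard_image_of_injective _ (fun x y hxy => by simpa using hxy)]
  exact ncard_compl_subgroup H

lemma ncard_T_snd [Group G] [Fintype G] (H : Subgroup G) {h : G} (hH : h ∈ H) (h1 : h ≠ 1) :
    (T H (1, h)).ncard = Nat.card G - Nat.card H := by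
  have e : T H (1, h) = (fun g : G => ((1, g) : G × G)) '' {g | g ∉ H} := by
    ext ⟨x, y⟩
    simp only [T, inS, Set.mem_ofPred_eq, Set.mem_image, Prod.mk_mul_mk, one_mul, Prod.mk.injEq,
      H.mul_mem_cancel_left hH]
    have := H.one_mem
    have hmem : ∀ z, h * z = 1 → z ∈ H := fun z e => by
      rw [← H.mul_mem_cancel_left hH, e]; exact H.one_mem
    grind [mul_eq_right]
  rw [e, Set.ncard_image_of_injective _ (fun x y hxy => by simpa using hxy)]
  exact ncard_compl_subgroup H

lemma ncard_T_diag [Group G] [Fintype G] (H : Subgroup G) {h : G} (hH : h ∈ H) (h1 : h ≠ 1) :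
    (T H (h, h)).ncard = Nat.card G - Nat.card H := by
  have e : T H (h, h) = (fun g : G => ((g, g) : G × G)) '' {g | g ∉ H} := by
    ext ⟨x, y⟩
    simp only [T, inS, Set.mem_ofPred_eq, Set.mem_image, Prod.mk_mul_mk, Prod.mk.injEq,
      H.mul_mem_cancel_left hH]
    have := H.one_mem
    have hmem : ∀ z, h * z = 1 → z ∈ H := fun z e => by
      rw [← H.mul_mem_cancel_left hH, e]; exact H.one_mem
    grind [mul_right_inj]
  rw [e, Set.ncard_image_of_injective _ (fun x y hxy => by simpa using congrArg Prod.fst hxy)]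
  exact ncard_compl_subgroup H

/-- Each disjunct is the point that `(a, b)` carries from one line of the connection set to another,
with the condition under which both ends lie in the connection set. -/
lemma mem_T_iff [Group G] (H : Subgroup G) {a b : G} (ha : a ≠ 1) (hb : b ≠ 1) (hab : a ≠ b)
    (p : G × G) :
    p ∈ T H (a, b) ↔
      (a ∉ H ∧ b ∉ H ∧ p = (a⁻¹, 1)) ∨ (a ∉ H ∧ b ∉ H ∧ p = (1, b⁻¹)) ∨
      (b ∉ H ∧ a⁻¹ * b ∉ H ∧ p = (a⁻¹ * b, 1)) ∨ (a ∉ H ∧ a⁻¹ * b ∉ H ∧ p = (1, b⁻¹ * a)) ∨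
      (b ∉ H ∧ a * b⁻¹ ∉ H ∧ p = (b⁻¹, b⁻¹)) ∨ (a ∉ H ∧ a * b⁻¹ ∉ H ∧ p = (a⁻¹, a⁻¹)) := by
  have i1 : b⁻¹ * a ∈ H ↔ a⁻¹ * b ∈ H := by rw [← H.inv_mem_iff]; simp
  have i2 : b * a⁻¹ ∈ H ↔ a * b⁻¹ ∈ H := by rw [← H.inv_mem_iff]; simp
  obtain ⟨x, y⟩ := p
  simp only [T, inS, Set.mem_ofPred_eq, Prod.mk_mul_mk, Prod.mk.injEq]
  constructor
  · rintro ⟨⟨hx, rfl⟩ | ⟨rfl, hy⟩ | ⟨rfl, hx⟩, ⟨h1, h2⟩ | ⟨h1, h2⟩ | ⟨h1, h2⟩⟩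
    · simp at h2; exact absurd h2 hb
    · obtain rfl := eq_inv_of_mul_eq_one_right h1
      left; simpa using ⟨by simpa using hx, by simpa using h2⟩
    · obtain rfl := eq_inv_mul_of_mul_eq h1
      right; right; left
      simpa using ⟨by simpa using h2, by simpa using hx⟩
    · obtain rfl := eq_inv_of_mul_eq_one_right h2
      right; left; simpa using ⟨by simpa using h1, by simpa using hy⟩
    · simp at h1; exact absurd h1 ha
    · obtain rfl := eq_inv_mul_of_mul_eq h1.symm
      right; right; right; left
      rw [mul_one] at hy h2
      exact ⟨h2, fun h => hy (i1.2 h), rfl, by simp⟩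
    · obtain rfl := eq_inv_of_mul_eq_one_right h2
      right; right; right; right; left
      exact ⟨by simpa using hx, h1, rfl, rfl⟩
    · obtain rfl := eq_inv_of_mul_eq_one_right h1
      right; right; right; right; right
      exact ⟨by simpa using hx, fun h => h2 (i2.2 h), rfl, rfl⟩
    · exact absurd (mul_right_cancel h1) hab
  · rintro (⟨h1, h2, rfl, rfl⟩ | ⟨h1, h2, rfl, rfl⟩ | ⟨h1, h2, rfl, rfl⟩ | ⟨h1, h2, rfl, rfl⟩ |
      ⟨h1, h2, rfl, rfl⟩ | ⟨h1, h2, rfl, rfl⟩) <;> simp [h1, h2, i1, i2]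

lemma ncard_T_left [Group G] (H : Subgroup G) {a b : G} (ha : a ≠ 1) (haH : a ∈ H) (hbH : b ∉ H) :
    (T H (a, b)).ncard = 2 := by
  have hb : b ≠ 1 := fun h => hbH (h ▸ H.one_mem)
  have hab : a ≠ b := fun h => hbH (h ▸ haH)
  have e : T H (a, b) = {(a⁻¹ * b, 1), (b⁻¹, b⁻¹)} := by
    ext p
    rw [mem_T_iff H ha hb hab]
    simp [haH, hbH, H.mul_mem_cancel_left]
  rw [e, Set.ncard_pair]
  simp [hb]

lemma ncard_T_right [Group G] (H : Subgroup G) {a b : G} (hb : b ≠ 1) (haH : a ∉ H) (hbH : b ∈ H) :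
    (T H (a, b)).ncard = 2 := by
  have ha : a ≠ 1 := fun h => haH (h ▸ H.one_mem)
  have hab : a ≠ b := fun h => haH (h ▸ hbH)
  have e : T H (a, b) = {(1, b⁻¹ * a), (a⁻¹, a⁻¹)} := by
    ext p
    rw [mem_T_iff H ha hb hab]
    simp [haH, hbH, H.mul_mem_cancel_right]
  rw [e, Set.ncard_pair]
  simp +contextual [ha]

open Classical in
lemma ncard_T_generic [Group G] (H : Subgroup G) {a b : G} (haH : a ∉ H) (hbH : b ∉ H)
    (hab : a ≠ b) :
    (T H (a, b)).ncard =
      2 + (if a⁻¹ * b ∈ H then 0 else 2) + (if a * b⁻¹ ∈ H then 0 else 2) := by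
  have ha : a ≠ 1 := fun h => haH (h ▸ H.one_mem)
  have hb : b ≠ 1 := fun h => hbH (h ▸ H.one_mem)
  have n1 : a⁻¹ * b ≠ 1 := fun h => hab (inv_mul_eq_one.mp h)
  have n2 : b⁻¹ * a ≠ 1 := fun h => hab (inv_mul_eq_one.mp h).symm
  have e : T H (a, b) = (({(a⁻¹, 1), (1, b⁻¹)} : Finset (G × G)) ∪
      ((if a⁻¹ * b ∈ H then ∅ else {(a⁻¹ * b, 1), (1, b⁻¹ * a)}) ∪
        (if a * b⁻¹ ∈ H then ∅ else {(b⁻¹, b⁻¹), (a⁻¹, a⁻¹)})) : Finset (G × G)) := by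
    ext p
    rw [mem_T_iff H ha hb hab]
    split_ifs <;> simp [*]
    all_goals tauto
  rw [e, Set.ncard_coe_finset]
  split_ifs <;>
    simp [Finset.card_insert_of_notMem, ha, hb, n1, n2, n2.symm, hab.symm]

/-- If `H` is a non-normal subgroup of `G` with `|H| = 2`, then the `c`-set of
`Γ_H(G)` equals `{2, 4, 6, |G| - |H|}`. -/
theorem stmt_9 [Group G] [Fintype G] (hG : 5 ≤ Nat.card G) (H : Subgroup G)
    (hnorm : ¬ H.Normal) (hcard : Nat.card H = 2) :
    cSet H = {2, 4, 6, Nat.card G - Nat.card H} := by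
  classical
  obtain ⟨h, h1, hH⟩ : ∃ h : G, h ≠ 1 ∧ ∀ x, x ∈ H ↔ x = 1 ∨ x = h := by
    obtain ⟨h, h1, hu⟩ := (Nat.card_eq_two_iff' (1 : H)).mp hcard
    refine ⟨h, by simpa using h1, fun x => ⟨fun hx => ?_, ?_⟩⟩
    · by_cases hx1 : x = 1
      · exact Or.inl hx1
      · exact Or.inr (congrArg Subtype.val (hu ⟨x, hx⟩ (by simpa using hx1)))
    · rintro (rfl | rfl)
      · exact H.one_mem
      · exact h.2
  have hhH : h ∈ H := (hH h).2 (Or.inr rfl)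
  have hinv : h⁻¹ = h := by
    rcases (hH _).1 (H.inv_mem hhH) with e | e
    · exact absurd (inv_eq_one.mp e) h1
    · exact e
  obtain ⟨a, hac⟩ : ∃ a : G, a * h ≠ h * a := by
    by_contra! hc
    refine hnorm ⟨fun n hn g => ?_⟩
    rcases (hH n).1 hn with rfl | rfl
    · simp
    · rw [hc g]; simpa using hn
  have haH : a ∉ H := by
    rw [hH]
    rintro (rfl | rfl)
    · simp at hac
    · exact hac rfl
  have hS : ∀ x y : G, x ∉ H → y ∉ H → x ≠ y → ¬ inS H (x, y) := by
    rintro x y hx hy hxy (⟨-, e⟩ | ⟨e, -⟩ | ⟨e, -⟩)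
    · exact hy ((hH y).2 (Or.inl e))
    · exact hx ((hH x).2 (Or.inl e))
    · exact hxy e
  have hne : ∀ x y : G, x ∉ H → ((x, y) : G × G) ≠ 1 := fun x y hx e =>
    hx ((hH x).2 (Or.inl (congrArg Prod.fst e)))
  rw [cSet_eq]
  ext n
  simp only [Set.mem_ofPred_eq, Set.mem_insert_iff, Set.mem_singleton_iff]
  constructor
  · rintro ⟨⟨x, y⟩, hc, hn, rfl⟩
    by_cases hx : x ∈ H <;> by_cases hy : y ∈ H
    · right; right; right
      rcases (hH x).1 hx with rfl | rfl <;> rcases (hH y).1 hy with rfl | rfl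
      · exact absurd rfl hc
      · exact ncard_T_snd H hhH h1
      · exact ncard_T_fst H hhH h1
      · exact ncard_T_diag H hhH h1
    · left
      refine ncard_T_left H ?_ hx hy
      rintro rfl
      exact hn (Or.inr (Or.inl ⟨rfl, hy⟩))
    · left
      refine ncard_T_right H ?_ hx hy
      rintro rfl
      exact hn (Or.inl ⟨hx, rfl⟩)
    · have hxy : x ≠ y := by
        rintro rfl
        exact hn (Or.inr (Or.inr ⟨rfl, hx⟩))
      rw [ncard_T_generic H hx hy hxy]
      split_ifs <;> simp
  · rintro (rfl | rfl | rfl | rfl)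
    · refine ⟨(h, a), fun e => h1 (congrArg Prod.fst e), ?_, (ncard_T_left H h1 hhH haH).symm⟩
      have ha1 : a ≠ 1 := fun e => haH (e ▸ H.one_mem)
      have hah : h ≠ a := fun e => haH (e ▸ hhH)
      simp [inS, h1, hhH, ha1]
    · have hb : a * h ∉ H := by rwa [H.mul_mem_cancel_right hhH]
      have hab : a ≠ a * h := by simpa using h1
      refine ⟨(a, a * h), hne _ _ haH, hS _ _ haH hb hab, ?_⟩
      have hQ : a * (a * h)⁻¹ ∉ H := by
        rw [hH]
        rintro (e | e)
        · exact hab (mul_inv_eq_one.mp e)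
        · rw [mul_inv_eq_iff_eq_mul] at e
          -- `a = h a h` with `h` an involution makes `a` and `h` commute.
          apply hac
          calc a * h = h⁻¹ * (h * (a * h)) := by group
            _ = h * a := by rw [← e, hinv]
      rw [ncard_T_generic H haH hb hab, if_pos (by simpa using hhH), if_neg hQ]
    · -- `|G|` is even, so `|G| ≥ 6` and some `b` avoids the five forbidden values.
      have h6 : 6 ≤ Fintype.card G := by
        have := H.card_subgroup_dvd_card
        rw [hcard] at this
        rw [← Nat.card_eq_fintype_card]
        omega
      obtain ⟨b, hb⟩ : ∃ b, b ∉ ({1, h, a, a * h, h * a} : Finset G) := by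
        by_contra! hall
        have hle := Finset.card_le_five (a := 1) (b := h) (c := a) (d := a * h) (e := h * a)
        rw [Finset.eq_univ_iff_forall.2 hall, Finset.card_univ] at hle
        omega
      simp only [Finset.mem_insert, Finset.mem_singleton, not_or] at hb
      obtain ⟨b1, bh, ba, bah, bha⟩ := hb
      have hbH : b ∉ H := by rw [hH]; tauto
      refine ⟨(a, b), hne _ _ haH, hS _ _ haH hbH (Ne.symm ba), ?_⟩
      have hP : a⁻¹ * b ∉ H := by
        rw [hH]
        rintro (e | e)
        · exact ba (inv_mul_eq_one.mp e).symm
        · exact bah (inv_mul_eq_iff_eq_mul.mp e)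
      have hQ : a * b⁻¹ ∉ H := by
        rw [hH]
        rintro (e | e)
        · exact ba (mul_inv_eq_one.mp e).symm
        · rw [mul_inv_eq_iff_eq_mul] at e
          apply bha
          rw [e, ← mul_assoc]
          nth_rewrite 1 [← hinv]
          simp
      rw [ncard_T_generic H haH hbH (Ne.symm ba), if_neg hP, if_neg hQ]
    · refine ⟨(h, 1), fun e => h1 (congrArg Prod.fst e), ?_, (ncard_T_fst H hhH h1).symm⟩
      simp [inS, h1, hhH, H.one_mem]
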